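/- Let X be a bounded geometry metric space. Then the following two conditions are equivalent: (1) for all R, ε > 0 there exists S > 0 such that for every finite subset F ⊆ X there exists a finitely supported function φ ∈ ℓ¹(X) with diam(supp(φ)) ≤ S and ∑_{x ∈ F} ∑_{y ∈ F, d(x,y) ≤ R} |φ(x) − φ(y)| < ε · ∑_{x ∈ F} |φ(x)|; (2) for all R, ε > 0 there exists S > 0 such that for every finite subset F ⊆ X there exists a finite subset E ⊆ X with diam(E) ≤ S and |∂_R E ∩ F| < ε · |E ∩ F|. -/

import Mathlib

/-- `N_R(E)`, the `R`-neighbourhood of `E`. -/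
def nbhd {X : Type*} [MetricSpace X] (R : ℝ) (E : Set X) : Set X :=
  {y | ∃ e ∈ E, dist y e ≤ R}

/-- `∂_R E = N_R(E) \ E`. -/
def bdry {X : Type*} [MetricSpace X] (R : ℝ) (E : Set X) : Set X :=
  nbhd R E \ E

/-- Bounded geometry. -/
def BoundedGeometry (X : Type*) [MetricSpace X] : Prop :=
  ∀ R : ℝ, 0 < R → ∃ N : ℕ, ∀ x : X,
    {y | dist x y ≤ R}.Finite ∧ {y | dist x y ≤ R}.ncard ≤ N

/-- A probability measure on `X`, as a function. -/
def IsProbFn {X : Type*} (μ : X → ℝ) : Prop :=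
  (∀ x, 0 ≤ μ x) ∧ Summable μ ∧ ∑' x, μ x = 1

/-- `μ(E)`. -/
noncomputable def measOf {X : Type*} (μ : X → ℝ) (E : Set X) : ℝ := ∑' x : E, μ x

/-- Uniform local amenability. -/
def ULA (X : Type*) [MetricSpace X] : Prop :=
  ∀ R : ℝ, 0 < R → ∀ ε : ℝ, 0 < ε → ∃ S : ℝ, 0 < S ∧
    ∀ F : Set X, F.Finite → ∃ E : Set X, E.Finite ∧
      EMetric.diam E ≤ ENNReal.ofReal S ∧
      ((bdry R E ∩ F).ncard : ℝ) < ε * ((E ∩ F).ncard : ℝ)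

/-- Measured uniform local amenability. -/
def ULAmu (X : Type*) [MetricSpace X] : Prop :=
  ∀ R : ℝ, 0 < R → ∀ ε : ℝ, 0 < ε → ∃ S : ℝ, 0 < S ∧
    ∀ μ : X → ℝ, IsProbFn μ → ∃ E : Set X, E.Finite ∧
      EMetric.diam E ≤ ENNReal.ofReal S ∧
      measOf μ (bdry R E) < ε * measOf μ E

/-- Coarse embedding. -/
def CoarseEmbedding {X Y : Type*} [MetricSpace X] [MetricSpace Y] (f : X → Y) : Prop :=
  ∃ ρm ρp : ℝ → ℝ, Monotone ρm ∧ Monotone ρp ∧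
    Filter.Tendsto ρm Filter.atTop Filter.atTop ∧
    ∀ x₁ x₂ : X, ρm (dist x₁ x₂) ≤ dist (f x₁) (f x₂) ∧
      dist (f x₁) (f x₂) ≤ ρp (dist x₁ x₂)

open Classical in
/-- The double `tsum` over a finite set is a finite sum. -/
lemma ula_tsum_eq {X : Type*} [MetricSpace X] (R : ℝ) (s : Finset X) (φ : X → ℝ) :
    (∑' x : (s : Set X), ∑' y : {y : X | y ∈ (s : Set X) ∧ dist (x : X) y ≤ R}, |φ x - φ y|)
      = ∑ x ∈ s, ∑ y ∈ s with dist x y ≤ R, |φ x - φ y| := by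
  have h : ∀ x : X, (∑' y : {y : X | y ∈ (s : Set X) ∧ dist x y ≤ R}, |φ x - φ y|)
      = ∑ y ∈ s with dist x y ≤ R, |φ x - φ y| := by
    intro x
    have e : {y : X | y ∈ (s : Set X) ∧ dist x y ≤ R}
        = ((s.filter (fun y => dist x y ≤ R) : Finset X) : Set X) := by
      ext y; simp
    rw [e]
    exact Finset.tsum_subtype' (s.filter (fun y => dist x y ≤ R)) (fun y => |φ x - φ y|)
  simp_rw [h]
  exact Finset.tsum_subtype' s (fun x => ∑ y ∈ s with dist x y ≤ R, |φ x - φ y|)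

open MeasureTheory in
/-- The integral of the indicator of `[a, b)`. -/
lemma ula_integral_ind (a b : ℝ) :
    Integrable ((Set.Ico a b).indicator (fun _ : ℝ => (1 : ℝ))) ∧
    ∫ t, (Set.Ico a b).indicator (fun _ : ℝ => (1 : ℝ)) t = max (b - a) 0 := by
  constructor
  · rw [integrable_indicator_iff measurableSet_Ico]
    exact integrableOn_const (by simp)
  · rw [integral_indicator measurableSet_Ico]
    simp [Measure.real, ENNReal.toReal_ofReal']

open Classical MeasureTheory in
/-- Function to set, for a fixed finite set `s` (layer-cake argument). -/
lemma ula_fun_to_set {X : Type*} [MetricSpace X] (R ε : ℝ) (s : Finset X)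
    (φ : X → ℝ)
    (h : ∑ x ∈ s, ∑ y ∈ s with dist x y ≤ R, |φ x - φ y| < ε * ∑ x ∈ s, |φ x|) :
    ∃ E : Set X, E.Finite ∧ E ⊆ Function.support φ ∧
      ((bdry R E ∩ (s : Set X)).ncard : ℝ) < ε * ((E ∩ (s : Set X)).ncard : ℝ) := by
  by_contra hcon
  push Not at hcon
  have key : ∀ t : ℝ,
      ε * ∑ x ∈ s, (Set.Ico 0 |φ x|).indicator (fun _ : ℝ => (1 : ℝ)) t ≤
        ∑ x ∈ s, ∑ y ∈ s with dist x y ≤ R,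
          (Set.Ico |φ y| |φ x|).indicator (fun _ : ℝ => (1 : ℝ)) t := by
    intro t
    have hnn : ∀ x y : X, 0 ≤ (Set.Ico |φ y| |φ x|).indicator (fun _ : ℝ => (1 : ℝ)) t :=
      fun x y => Set.indicator_nonneg (fun _ _ => zero_le_one) _
    by_cases ht : 0 ≤ t
    · set E : Finset X := s.filter (fun x => t < |φ x|) with hE
      set B : Finset X := s.filter (fun y => |φ y| ≤ t ∧ ∃ x ∈ E, dist x y ≤ R) with hB
      have h1 := hcon (E : Set X) E.finite_toSet (by
        intro x hx
        simp only [hE, Finset.coe_filter, Set.mem_setOf_eq] at hx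
        rw [Function.mem_support]
        intro h0
        rw [h0, abs_zero] at hx
        linarith [hx.2])
      have e1 : (E : Set X) ∩ (s : Set X) = (E : Set X) := by
        ext x; simp [hE]; tauto
      have e2 : bdry R (E : Set X) ∩ (s : Set X) ⊆ (B : Set X) := by
        rintro y ⟨⟨⟨e, he, hd⟩, hyE⟩, hys⟩
        have hys' : y ∈ s := hys
        have : |φ y| ≤ t := by
          by_contra hlt
          exact hyE (by simpa [hE] using ⟨hys', not_le.mp hlt⟩)
        rw [hB, Finset.mem_coe, Finset.mem_filter]
        exact ⟨hys', this, e, he, by rwa [dist_comm]⟩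
      have h2 : ((bdry R (E : Set X) ∩ (s : Set X)).ncard : ℝ) ≤ B.card := by
        have := Set.ncard_le_ncard e2 B.finite_toSet
        rw [Set.ncard_coe_finset] at this
        exact_mod_cast this
      rw [e1, Set.ncard_coe_finset] at h1
      have h3 : ∑ x ∈ s, (Set.Ico 0 |φ x|).indicator (fun _ : ℝ => (1 : ℝ)) t = E.card := by
        simp [Set.indicator_apply, ht, hE]
      rw [h3]
      refine (h1.trans h2).trans ?_
      have h4 : (B.card : ℝ) = ∑ y ∈ B, (1 : ℝ) := by simp
      simp_rw [Finset.sum_filter]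
      rw [h4, Finset.sum_comm]
      refine le_trans (Finset.sum_le_sum (g := fun y => ∑ x ∈ s, if dist x y ≤ R then
          (Set.Ico |φ y| |φ x|).indicator (fun _ : ℝ => (1 : ℝ)) t else 0) ?_)
        (Finset.sum_le_sum_of_subset_of_nonneg (Finset.filter_subset _ _) ?_)
      · intro y hy
        rw [hB, Finset.mem_filter] at hy
        obtain ⟨_, hyt, x, hx, hd⟩ := hy
        rw [hE, Finset.mem_filter] at hx
        refine le_trans ?_ (Finset.single_le_sum (f := fun x => if dist x y ≤ R then
          (Set.Ico |φ y| |φ x|).indicator (fun _ : ℝ => (1 : ℝ)) t else 0) ?_ hx.1)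
        · simp [hd, Set.indicator_apply, hyt, hx.2]
        · intro z _
          split_ifs
          · exact hnn _ _
          · exact le_rfl
      · intro y _ _
        refine Finset.sum_nonneg fun z _ => ?_
        split_ifs
        · exact hnn _ _
        · exact le_rfl
    · have h3 : ∑ x ∈ s, (Set.Ico 0 |φ x|).indicator (fun _ : ℝ => (1 : ℝ)) t = 0 := by
        simp [Set.indicator_apply, ht]
      rw [h3, mul_zero]
      exact Finset.sum_nonneg fun x _ => Finset.sum_nonneg fun y _ => hnn x y
  have hint := integral_mono (μ := volume)
    ((integrable_finsetSum s fun x _ => (ula_integral_ind 0 |φ x|).1).const_mul ε)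
    (integrable_finsetSum s fun x _ => integrable_finsetSum
      (s.filter fun y => dist x y ≤ R) fun y _ => (ula_integral_ind |φ y| |φ x|).1)
    key
  rw [integral_const_mul, integral_finsetSum s fun x _ => (ula_integral_ind 0 |φ x|).1,
    integral_finsetSum s fun x _ => integrable_finsetSum
      (s.filter fun y => dist x y ≤ R) fun y _ => (ula_integral_ind |φ y| |φ x|).1] at hint
  have e3 : ∀ x : X, ∫ t, ∑ y ∈ s with dist x y ≤ R,
      (Set.Ico |φ y| |φ x|).indicator (fun _ : ℝ => (1 : ℝ)) t
      = ∑ y ∈ s with dist x y ≤ R, max (|φ x| - |φ y|) 0 := by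
    intro x
    rw [integral_finsetSum _ fun y _ => (ula_integral_ind |φ y| |φ x|).1]
    simp_rw [(ula_integral_ind _ _).2]
  have e4 : ∀ x : X, max |φ x| 0 = |φ x| := fun x => max_eq_left (abs_nonneg _)
  simp_rw [e3, (ula_integral_ind _ _).2, sub_zero, e4] at hint
  have : ∑ x ∈ s, ∑ y ∈ s with dist x y ≤ R, max (|φ x| - |φ y|) 0
      ≤ ∑ x ∈ s, ∑ y ∈ s with dist x y ≤ R, |φ x - φ y| :=
    Finset.sum_le_sum fun x _ => Finset.sum_le_sum fun y _ =>
      max_le (abs_sub_abs_le_abs_sub _ _) (abs_nonneg _)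
  linarith

open Classical in
/-- Set to function, for a fixed finite set `s`. -/
lemma ula_set_to_fun {X : Type*} [MetricSpace X] (R : ℝ) (N : ℕ)
    (hN : ∀ x : X, {y | dist x y ≤ R}.Finite ∧ {y | dist x y ≤ R}.ncard ≤ N)
    (s : Finset X) (E : Set X) :
    ∑ x ∈ s, ∑ y ∈ s with dist x y ≤ R,
        |E.indicator (fun _ => (1 : ℝ)) x - E.indicator (fun _ => (1 : ℝ)) y|
      ≤ 2 * N * ((bdry R E ∩ (s : Set X)).ncard : ℝ) := by
  set B : Finset X := s.filter (fun y => y ∈ bdry R E) with hB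
  have hBE : bdry R E ∩ (s : Set X) = (B : Set X) := by
    ext y; simp [hB]; tauto
  rw [hBE, Set.ncard_coe_finset]
  have hpt : ∀ x ∈ s, ∀ y ∈ s, dist x y ≤ R →
      |E.indicator (fun _ => (1 : ℝ)) x - E.indicator (fun _ => (1 : ℝ)) y|
        ≤ (if x ∈ B then 1 else 0) + (if y ∈ B then 1 else 0) := by
    intro x hx y hy hd
    by_cases h1 : x ∈ E <;> by_cases h2 : y ∈ E
    · simp [h1, h2]; positivity
    · have : y ∈ B := by
        rw [hB, Finset.mem_filter]
        exact ⟨hy, ⟨x, h1, by rwa [dist_comm]⟩, h2⟩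
      simp [h1, h2, this]; positivity
    · have : x ∈ B := by
        rw [hB, Finset.mem_filter]
        exact ⟨hx, ⟨y, h2, hd⟩, h1⟩
      simp [h1, h2, this]; positivity
    · simp [h1, h2]; positivity
  have hcard : ∀ x : X, ((s.filter (fun y => dist x y ≤ R)).card : ℝ) ≤ N := by
    intro x
    have : (s.filter (fun y => dist x y ≤ R)).card ≤ N := by
      rw [← Set.ncard_coe_finset]
      refine (Set.ncard_le_ncard ?_ (hN x).1).trans (hN x).2
      intro y hy
      simp at hy
      exact hy.2
    exact_mod_cast this
  have hsum : ∑ x ∈ s, ∑ y ∈ s with dist x y ≤ R, (if x ∈ B then (1 : ℝ) else 0)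
      ≤ N * B.card := by
    calc _ = ∑ x ∈ s, (if x ∈ B then ((s.filter (fun y => dist x y ≤ R)).card : ℝ) else 0) := by
          refine Finset.sum_congr rfl fun x _ => ?_
          split_ifs <;> simp
      _ ≤ ∑ x ∈ s, (if x ∈ B then (N : ℝ) else 0) := by
          refine Finset.sum_le_sum fun x _ => ?_
          split_ifs
          · exact hcard x
          · exact le_rfl
      _ = N * B.card := by
          rw [← Finset.sum_filter, Finset.sum_const, nsmul_eq_mul, mul_comm]
          congr 3
          ext x; simp [hB]
  have hsym : ∑ x ∈ s, ∑ y ∈ s with dist x y ≤ R, (if y ∈ B then (1 : ℝ) else 0)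
      = ∑ x ∈ s, ∑ y ∈ s with dist x y ≤ R, (if x ∈ B then (1 : ℝ) else 0) := by
    simp_rw [Finset.sum_filter]
    rw [Finset.sum_comm]
    simp_rw [dist_comm]
  calc _ ≤ ∑ x ∈ s, ∑ y ∈ s with dist x y ≤ R,
        ((if x ∈ B then (1 : ℝ) else 0) + (if y ∈ B then (1 : ℝ) else 0)) := by
        refine Finset.sum_le_sum fun x hx => Finset.sum_le_sum fun y hy => ?_
        rw [Finset.mem_filter] at hy
        exact hpt x hx y hy.1 hy.2
    _ ≤ 2 * N * B.card := by
        simp_rw [Finset.sum_add_distrib]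
        rw [hsym]
        linarith

/-- The equivalence relative to an arbitrary family `P` of finite sets `F` (e.g. the
nonempty ones). This is the version with content: for `F = ∅` both conditions fail. -/
theorem ula_function_iff_set_of {X : Type*} [MetricSpace X] (hbg : BoundedGeometry X)
    (P : Set X → Prop) :
    (∀ R : ℝ, 0 < R → ∀ ε : ℝ, 0 < ε → ∃ S : ℝ, 0 < S ∧
      ∀ F : Set X, P F → F.Finite → ∃ φ : X → ℝ,
        (Function.support φ).Finite ∧
        EMetric.diam (Function.support φ) ≤ ENNReal.ofReal S ∧
        (∑' x : F, ∑' y : {y : X | y ∈ F ∧ dist (x : X) y ≤ R}, |φ x - φ y|)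
          < ε * ∑' x : F, |φ (x : X)|)
    ↔
    (∀ R : ℝ, 0 < R → ∀ ε : ℝ, 0 < ε → ∃ S : ℝ, 0 < S ∧
      ∀ F : Set X, P F → F.Finite → ∃ E : Set X, E.Finite ∧
        EMetric.diam E ≤ ENNReal.ofReal S ∧
        ((bdry R E ∩ F).ncard : ℝ) < ε * ((E ∩ F).ncard : ℝ)) := by
  classical
  constructor
  · intro H R hR ε hε
    obtain ⟨S, hS, h⟩ := H R hR ε hε
    refine ⟨S, hS, fun F hP hF => ?_⟩
    obtain ⟨φ, -, hd, hφ⟩ := h F hP hF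
    lift F to Finset X using hF
    rw [ula_tsum_eq, Finset.tsum_subtype' F (fun x => |φ x|)] at hφ
    obtain ⟨E, hE, hsub, hlt⟩ := ula_fun_to_set R ε F φ hφ
    exact ⟨E, hE, (Metric.ediam_mono hsub).trans hd, hlt⟩
  · intro H R hR ε hε
    obtain ⟨N, hN⟩ := hbg R hR
    have hpos : (0 : ℝ) < 2 * N + 1 := by positivity
    obtain ⟨S, hS, h⟩ := H R hR (ε / (2 * N + 1)) (by positivity)
    refine ⟨S, hS, fun F hP hF => ?_⟩
    obtain ⟨E, hE, hd, hlt⟩ := h F hP hF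
    have hsupp : Function.support (E.indicator (fun _ => (1 : ℝ))) = E := by
      ext x; simp
    refine ⟨E.indicator (fun _ => (1 : ℝ)), by rwa [hsupp], by rwa [hsupp], ?_⟩
    lift F to Finset X using hF
    rw [ula_tsum_eq, Finset.tsum_subtype' F (fun x => |E.indicator (fun _ => (1 : ℝ)) x|)]
    have hc : ∑ x ∈ F, |E.indicator (fun _ => (1 : ℝ)) x| = ((E ∩ (F : Set X)).ncard : ℝ) := by
      have e : E ∩ (F : Set X) = ((F.filter (fun x => x ∈ E) : Finset X) : Set X) := by
        ext x; simp; tauto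
      rw [e, Set.ncard_coe_finset]
      simp [Set.indicator_apply, apply_ite]
    rw [hc]
    refine (ula_set_to_fun R N hN F E).trans_lt ?_
    rw [div_mul_eq_mul_div, lt_div_iff₀ hpos] at hlt
    have hb : (0 : ℝ) ≤ ((bdry R E ∩ (F : Set X)).ncard : ℝ) := by positivity
    nlinarith

/-- Lemma 2.4 (for $ULA$): the 'function' (Reiter-type) formulation and the 'set'
(Følner-type) formulation are equivalent for any bounded geometry metric space. -/
theorem ula_function_iff_set {X : Type*} [MetricSpace X] (hbg : BoundedGeometry X) :
    (∀ R : ℝ, 0 < R → ∀ ε : ℝ, 0 < ε → ∃ S : ℝ, 0 < S ∧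
      ∀ F : Set X, F.Finite → ∃ φ : X → ℝ,
        (Function.support φ).Finite ∧
        EMetric.diam (Function.support φ) ≤ ENNReal.ofReal S ∧
        (∑' x : F, ∑' y : {y : X | y ∈ F ∧ dist (x : X) y ≤ R}, |φ x - φ y|)
          < ε * ∑' x : F, |φ (x : X)|)
    ↔
    (∀ R : ℝ, 0 < R → ∀ ε : ℝ, 0 < ε → ∃ S : ℝ, 0 < S ∧
      ∀ F : Set X, F.Finite → ∃ E : Set X, E.Finite ∧
        EMetric.diam E ≤ ENNReal.ofReal S ∧
        ((bdry R E ∩ F).ncard : ℝ) < ε * ((E ∩ F).ncard : ℝ)) := by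
  simpa using ula_function_iff_set_of hbg (fun _ => True)
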